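/- arXiv:math/9802117 — 3 statements merged into one kernel-verified Lean document; each statement's English description precedes it below -/
import Mathlib

section
/- Suppose there exists L > 0 such that the map l ↦ A(l) restricted to [0, L] is a continuous, strictly increasing bijection from [0, L] onto [0, 1], with inverse function A⁻¹ : [0, 1] → [0, L]. Then for every real α > 0, the α-th moment of the k-th nearest-neighbor distance satisfies E[D_k(N)^α] = (N! / ((N−k)!·(k−1)!)) · ∫₀¹ (A⁻¹(w))^α · w^{k−1} · (1 − w)^{N−k} dw. -/
open MeasureTheory Metric Filter
open scoped ENNReal Topology

/-- The `k`-th smallest value (1-indexed) among the `N` real numbers `f 0, …, f (N-1)`. -/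
noncomputable def kthVal {N : ℕ} (k : ℕ) (f : Fin N → ℝ) : ℝ :=
  (((Finset.univ : Finset (Fin N)).val.map f).sort (· ≤ ·)).getD (k - 1) 0

theorem sorted_getD_le_iff (l : List ℝ) (hl : l.Pairwise (· ≤ ·)) (j : ℕ) (hj : j < l.length)
    (t : ℝ) : l.getD j 0 ≤ t ↔ j + 1 ≤ l.countP (fun a => decide (a ≤ t)) := by
  induction l generalizing j with
  | nil => simp at hj
  | cons a l ih =>
    rw [List.pairwise_cons] at hl
    by_cases hat : a ≤ t
    · rw [List.countP_cons_of_pos (by simpa using hat)]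
      cases j with
      | zero => simp [hat]
      | succ j =>
        rw [List.getD_cons_succ, ih hl.2 j (by simpa using hj)]
        omega
    · have h0 : (a :: l).countP (fun a => decide (a ≤ t)) = 0 := by
        rw [List.countP_eq_zero]
        intro b hb
        rcases List.mem_cons.1 hb with rfl | hb
        · simpa using hat
        · have := hl.1 b hb
          simp only [decide_eq_true_eq, not_le]
          push Not at hat
          linarith
      rw [h0]
      simp only [nonpos_iff_eq_zero, Nat.add_eq_zero_iff, one_ne_zero, and_false, iff_false]
      cases j with
      | zero => simpa using hat
      | succ j =>
        have hj' : j < l.length := by simpa using hj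
        rw [List.getD_cons_succ, List.getD_eq_getElem _ _ hj']
        have := hl.1 _ (List.getElem_mem hj')
        push Not at hat ⊢
        linarith

theorem kthVal_le_iff {N : ℕ} (k : ℕ) (hk : 1 ≤ k) (hkN : k ≤ N) (f : Fin N → ℝ) (t : ℝ) :
    kthVal k f ≤ t ↔ k ≤ (Finset.univ.filter (fun i => f i ≤ t)).card := by
  unfold kthVal
  rw [sorted_getD_le_iff _ (Multiset.pairwise_sort _ _) _ (by simp; omega)]
  rw [← Multiset.coe_countP, Multiset.sort_eq, Multiset.countP_map]
  rw [Nat.sub_add_cancel hk]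
  simp [Finset.card, Finset.filter]

noncomputable def bF (N k : ℕ) : Polynomial ℝ :=
  ∑ j ∈ Finset.Ico k (N + 1), bernsteinPolynomial ℝ N j

theorem pi_count {M : Type*} [MeasurableSpace M] (μ : Measure M) [IsProbabilityMeasure μ]
    (N k : ℕ) (B : Set M) (hB : MeasurableSet B) [DecidablePred (· ∈ B)] :
    (Measure.pi fun _ : Fin N => μ) {ω | k ≤ (Finset.univ.filter (fun i => ω i ∈ B)).card}
      = ENNReal.ofReal ((bF N k).eval (μ B).toReal) := by
  classical
  set p := (μ B).toReal with hp
  have hp0 : 0 ≤ p := ENNReal.toReal_nonneg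
  have hp1 : p ≤ 1 := measureReal_le_one
  have hpB : μ B = ENNReal.ofReal p := by rw [hp, ENNReal.ofReal_toReal (measure_ne_top _ _)]
  have hpC : μ Bᶜ = ENNReal.ofReal (1 - p) := by
    rw [prob_compl_eq_one_sub hB, hpB, ENNReal.ofReal_sub _ hp0, ENNReal.ofReal_one]
  let E : Finset (Fin N) → Set (Fin N → M) := fun S =>
    Set.pi Set.univ (fun i => if i ∈ S then B else Bᶜ)
  have hE : ∀ S ω, ω ∈ E S ↔ Finset.univ.filter (fun i => ω i ∈ B) = S := by
    intro S ω
    simp only [E, Set.mem_univ_pi, Finset.ext_iff, Finset.mem_filter, Finset.mem_univ, true_and]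
    refine forall_congr' fun i => ?_
    by_cases h : i ∈ S <;> simp [h]
  have hset : {ω : Fin N → M | k ≤ (Finset.univ.filter (fun i => ω i ∈ B)).card}
      = ⋃ S ∈ (Finset.univ.filter (fun S : Finset (Fin N) => k ≤ S.card)), E S := by
    ext ω
    simp only [Set.mem_setOf_eq, Set.mem_iUnion, hE, Finset.mem_filter, Finset.mem_univ, true_and]
    simp
  have hmeas : ∀ S, MeasurableSet (E S) := by
    intro S
    refine MeasurableSet.univ_pi fun i => ?_
    split_ifs
    · exact hB
    · exact hB.compl
  have hval : ∀ S, (Measure.pi fun _ : Fin N => μ) (E S)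
      = ENNReal.ofReal (p ^ S.card * (1 - p) ^ (N - S.card)) := by
    intro S
    rw [Measure.pi_pi]
    have : ∀ i, μ (if i ∈ S then B else Bᶜ) = if i ∈ S then ENNReal.ofReal p
        else ENNReal.ofReal (1 - p) := by
      intro i; split_ifs <;> assumption
    simp_rw [this]
    rw [Finset.prod_ite, Finset.prod_const, Finset.prod_const,
      ENNReal.ofReal_mul (by positivity), ENNReal.ofReal_pow hp0,
      ENNReal.ofReal_pow (by linarith)]
    congr 2
    · simp
    · rw [← Finset.compl_filter, Finset.card_compl]; simp
  rw [hset, measure_biUnion_finset _ (fun S _ => hmeas S)]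
  · simp_rw [hval]
    rw [← ENNReal.ofReal_sum_of_nonneg
      (fun S _ => mul_nonneg (pow_nonneg hp0 _) (pow_nonneg (by linarith) _))]
    congr 1
    rw [Finset.sum_filter, ← Finset.powerset_univ,
      Finset.sum_powerset_apply_card
        (fun j => if k ≤ j then p ^ j * (1 - p) ^ (N - j) else 0)]
    simp only [Finset.card_univ, Fintype.card_fin, bF, Polynomial.eval_finset_sum]
    have : Finset.Ico k (N + 1) = (Finset.range (N + 1)).filter (fun j => k ≤ j) := by
      ext j; simp; omega
    rw [this, Finset.sum_filter]
    refine Finset.sum_congr rfl fun j _ => ?_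
    split_ifs
    · simp [bernsteinPolynomial, mul_assoc]
    · simp
  · intro S _ T _ hST
    rw [Function.onFun, Set.disjoint_left]
    intro ω h1 h2
    exact hST (((hE _ _).1 h1).symm.trans ((hE _ _).1 h2))

theorem bF_derivative (N k : ℕ) (hk : 1 ≤ k) (hkN : k ≤ N) :
    Polynomial.derivative (bF N k) = (N : Polynomial ℝ) * bernsteinPolynomial ℝ (N - 1) (k - 1) := by
  obtain ⟨k, rfl⟩ : ∃ m, k = m + 1 := ⟨k - 1, by omega⟩
  unfold bF
  rw [Polynomial.derivative_sum, ← Finset.sum_Ico_add' _ k N 1]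
  simp_rw [bernsteinPolynomial.derivative_succ]
  rw [← Finset.mul_sum]
  congr 1
  have := Finset.sum_Ico_sub (fun j => bernsteinPolynomial ℝ (N - 1) j) (show k ≤ N by omega)
  rw [← neg_inj, ← Finset.sum_neg_distrib]
  simp only [neg_sub, this, Nat.add_sub_cancel]
  rw [bernsteinPolynomial.eq_zero_of_lt ℝ (by omega), zero_sub]

theorem bF_zero (N k : ℕ) (hk : 1 ≤ k) : (bF N k).eval 0 = 0 := by
  unfold bF
  rw [Polynomial.eval_finset_sum]
  refine Finset.sum_eq_zero fun j hj => ?_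
  rw [Finset.mem_Ico] at hj
  rw [bernsteinPolynomial.eval_at_0, if_neg (by omega)]

theorem bF_integral (N k : ℕ) (hk : 1 ≤ k) (hkN : k ≤ N) (a : ℝ) :
    ∫ w in (0:ℝ)..a, (N.factorial : ℝ) / ((N - k).factorial * (k - 1).factorial) *
      (w ^ (k - 1) * (1 - w) ^ (N - k)) = (bF N k).eval a := by
  have hc : (N.factorial : ℝ) / ((N - k).factorial * (k - 1).factorial)
      = N * ((N - 1).choose (k - 1)) := by
    obtain ⟨k, rfl⟩ : ∃ m, k = m + 1 := ⟨k - 1, by omega⟩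
    obtain ⟨N, rfl⟩ : ∃ m, N = m + 1 := ⟨N - 1, by omega⟩
    simp only [Nat.add_sub_cancel, Nat.add_sub_add_right]
    rw [Nat.cast_choose ℝ (by omega), Nat.factorial_succ]
    push_cast
    field_simp
  have h : ∀ w : ℝ, HasDerivAt (fun w => (bF N k).eval w)
      ((N.factorial : ℝ) / ((N - k).factorial * (k - 1).factorial) *
      (w ^ (k - 1) * (1 - w) ^ (N - k))) w := by
    intro w
    refine ((bF N k).hasDerivAt w).congr_deriv ?_
    rw [bF_derivative N k hk hkN, hc]
    have : N - 1 - (k - 1) = N - k := by omega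
    simp [bernsteinPolynomial, this, mul_assoc]
  rw [intervalIntegral.integral_eq_sub_of_hasDerivAt (fun w _ => h w), bF_zero N k hk, sub_zero]
  apply Continuous.intervalIntegrable
  fun_prop

/-- Let `M` be a separable metric space with a Borel probability measure `μ`,
`x ∈ M`, `1 ≤ k ≤ N`, and let `D_k(N)` be the `k`-th smallest of the distances from `x` to `N`
i.i.d. sites with distribution `μ` (modelled by the product measure on `Fin N → M`).  Suppose
`A(l) = μ(closedBall x l)` restricted to `[0, L]` (some `L > 0`) is a continuous strictly
increasing bijection onto `[0, 1]` with inverse `Ainv`.  Then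
for every real `α > 0`,
`E[D_k(N)^α] = (N! / ((N−k)!(k−1)!)) ∫₀¹ Ainv(w)^α w^(k−1) (1−w)^(N−k) dw`. -/
theorem kth_nearest_distance_moment
    {M : Type*} [MetricSpace M] [TopologicalSpace.SeparableSpace M]
    [MeasurableSpace M] [BorelSpace M]
    (μ : Measure M) [IsProbabilityMeasure μ]
    (x : M) (N k : ℕ) (hN : 1 ≤ N) (hk : 1 ≤ k) (hkN : k ≤ N)
    (L : ℝ) (hL : 0 < L) (Ainv : ℝ → ℝ)
    (hcont : ContinuousOn (fun l => (μ (closedBall x l)).toReal) (Set.Icc 0 L))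
    (hmono : StrictMonoOn (fun l => (μ (closedBall x l)).toReal) (Set.Icc 0 L))
    (hbij : Set.BijOn (fun l => (μ (closedBall x l)).toReal) (Set.Icc 0 L) (Set.Icc 0 1))
    (hinv : Set.InvOn Ainv (fun l => (μ (closedBall x l)).toReal) (Set.Icc 0 L) (Set.Icc 0 1))
    (α : ℝ) (hα : 0 < α) :
    ∫ ω : Fin N → M, (kthVal k (fun i => dist x (ω i))) ^ α
        ∂(Measure.pi fun _ : Fin N => μ) =
      (N.factorial : ℝ) / ((N - k).factorial * (k - 1).factorial) *
        ∫ w in (0:ℝ)..1, (Ainv w) ^ α * w ^ (k - 1) * (1 - w) ^ (N - k) := by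
  classical
  set A : ℝ → ℝ := fun l => (μ (closedBall x l)).toReal with hA
  set c : ℝ := (N.factorial : ℝ) / ((N - k).factorial * (k - 1).factorial) with hc
  have hc0 : 0 ≤ c := by positivity
  set D : (Fin N → M) → ℝ := fun ω => kthVal k (fun i => dist x (ω i)) with hD
  let g : ℝ → ℝ := fun w => c * (w ^ (k - 1) * (1 - w) ^ (N - k))
  have hgc : Continuous g := by fun_prop
  have hg0 : ∀ w ∈ Set.Ioc (0:ℝ) 1, 0 ≤ g w := fun w hw =>
    mul_nonneg hc0 (mul_nonneg (pow_nonneg hw.1.le _) (pow_nonneg (by linarith [hw.2]) _))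
  have hA01 : ∀ t, A t ∈ Set.Icc (0:ℝ) 1 := fun t => ⟨ENNReal.toReal_nonneg, measureReal_le_one⟩
  have hAmono : Monotone A := fun s t h =>
    ENNReal.toReal_mono (measure_ne_top _ _) (measure_mono (closedBall_subset_closedBall h))
  have hAinv : ∀ w ∈ Set.Icc (0:ℝ) 1, Ainv w ∈ Set.Icc 0 L ∧ A (Ainv w) = w := by
    intro w hw
    obtain ⟨l, hl, rfl⟩ := hbij.surjOn hw
    have h : Ainv (A l) = l := hinv.1 hl
    refine ⟨?_, hinv.2 hw⟩
    change Ainv (A l) ∈ _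
    rw [h]; exact hl
  have hiff : ∀ w ∈ Set.Ioc (0:ℝ) 1, ∀ t, Ainv w ≤ t ↔ w ≤ A t := by
    intro w hw t
    obtain ⟨h1, h2⟩ := hAinv w ⟨hw.1.le, hw.2⟩
    constructor
    · intro h
      rw [← h2]; exact hAmono h
    · intro h
      by_contra! hlt
      by_cases ht : 0 ≤ t
      · have := hmono ⟨ht, hlt.le.trans h1.2⟩ h1 hlt
        change A t < A (Ainv w) at this
        linarith
      · have : A t = 0 := by
          simp [hA, closedBall_eq_empty.2 (not_le.1 ht)]
        linarith [hw.1]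
  -- law of `D`
  have hDset : ∀ t, D ⁻¹' Set.Iic t
      = {ω | k ≤ (Finset.univ.filter (fun i => ω i ∈ closedBall x t)).card} := by
    intro t
    ext ω
    simp only [Set.mem_preimage, Set.mem_Iic, hD, kthVal_le_iff k hk hkN, Set.mem_setOf_eq,
      mem_closedBall']
  have hDm : Measurable D := by
    refine measurable_of_Iic fun t => ?_
    rw [hDset]
    have : Measurable fun ω : Fin N → M =>
        (Finset.univ.filter (fun i => ω i ∈ closedBall x t)).card := by
      simp_rw [Finset.card_filter]
      refine Finset.measurable_sum _ fun i _ => ?_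
      exact Measurable.ite (measurable_pi_apply i isClosed_closedBall.measurableSet)
        measurable_const measurable_const
    exact this measurableSet_Ici
  have hAm : AEMeasurable Ainv (volume.restrict (Set.Ioc (0:ℝ) 1)) := by
    refine aemeasurable_restrict_of_monotoneOn measurableSet_Ioc ?_
    intro v hv w hw hvw
    rw [hiff v hv]
    rwa [(hAinv w ⟨hw.1.le, hw.2⟩).2]
  set ρ : Measure ℝ := (volume.restrict (Set.Ioc (0:ℝ) 1)).withDensity
    (fun w => ENNReal.ofReal (g w)) with hρ
  have hac : ρ ≪ volume.restrict (Set.Ioc (0:ℝ) 1) := withDensity_absolutelyContinuous _ _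
  have hAmρ : AEMeasurable Ainv ρ := hAm.mono_ac hac
  have hρIic : ∀ a ∈ Set.Icc (0:ℝ) 1, ρ (Set.Iic a) = ENNReal.ofReal ((bF N k).eval a) := by
    intro a ha
    rw [hρ, withDensity_apply _ measurableSet_Iic, Measure.restrict_restrict measurableSet_Iic]
    have : Set.Iic a ∩ Set.Ioc (0:ℝ) 1 = Set.Ioc 0 a := by
      ext w
      simp only [Set.mem_inter_iff, Set.mem_Iic, Set.mem_Ioc]
      constructor
      · rintro ⟨h1, h2, h3⟩; exact ⟨h2, h1⟩
      · rintro ⟨h1, h2⟩; exact ⟨h2, h1, h2.trans ha.2⟩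
    rw [this, ← ofReal_integral_eq_lintegral_ofReal]
    · rw [← intervalIntegral.integral_of_le ha.1, bF_integral N k hk hkN]
    · exact (hgc.integrableOn_Icc).mono_set Set.Ioc_subset_Icc_self
    · refine (ae_restrict_iff' measurableSet_Ioc).2 (ae_of_all _ fun w hw => ?_)
      exact hg0 w ⟨hw.1, hw.2.trans ha.2⟩
  have hmeq : Measure.map D (Measure.pi fun _ : Fin N => μ) = Measure.map Ainv ρ := by
    haveI : IsProbabilityMeasure (Measure.map D (Measure.pi fun _ : Fin N => μ)) :=
      Measure.isProbabilityMeasure_map hDm.aemeasurable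
    refine Measure.ext_of_Iic _ _ fun t => ?_
    rw [Measure.map_apply hDm measurableSet_Iic, hDset,
      pi_count μ N k _ isClosed_closedBall.measurableSet,
      Measure.map_apply_of_aemeasurable hAmρ measurableSet_Iic]
    have : (Ainv ⁻¹' Set.Iic t : Set ℝ) =ᵐ[ρ] Set.Iic (A t) := by
      refine hac.ae_le ?_
      refine (ae_restrict_iff' measurableSet_Ioc).2 (ae_of_all _ fun w hw => ?_)
      exact propext (hiff w hw t)
    rw [measure_congr this, hρIic _ (hA01 t)]
  have hsm : Measurable fun y : ℝ => y ^ α := by fun_prop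
  calc ∫ ω : Fin N → M, (D ω) ^ α ∂(Measure.pi fun _ : Fin N => μ)
      = ∫ y, y ^ α ∂(Measure.map D (Measure.pi fun _ : Fin N => μ)) :=
        (integral_map hDm.aemeasurable hsm.aestronglyMeasurable).symm
    _ = ∫ w, (Ainv w) ^ α ∂ρ := by
        rw [hmeq, integral_map hAmρ hsm.aestronglyMeasurable]
    _ = ∫ w in Set.Ioc (0:ℝ) 1, (ENNReal.ofReal (g w)).toReal • (Ainv w) ^ α := by
        rw [hρ, integral_withDensity_eq_integral_toReal_smul (by fun_prop) (by simp)]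
    _ = ∫ w in Set.Ioc (0:ℝ) 1, c * ((Ainv w) ^ α * w ^ (k - 1) * (1 - w) ^ (N - k)) := by
        refine setIntegral_congr_fun measurableSet_Ioc fun w hw => ?_
        simp only [smul_eq_mul]
        rw [ENNReal.toReal_ofReal (hg0 w hw)]
        simp only [g]
        ring
    _ = _ := by
        rw [intervalIntegral.integral_of_le zero_le_one, integral_const_mul]
end

section
/- Suppose M has finite diameter and there exists l₀ > 0 with π·l₀² ≤ 1 such that A(l) = π·l² for all 0 ≤ l ≤ l₀ (the space is locally flat and two-dimensional around x out to radius l₀). Then for each fixed k ≥ 1 and each ρ with 1 − π·l₀² < ρ < 1, there exists a constant C > 0 such that for all N ≥ k: |E[D_k(N)] − (1/√π) · (Γ(k + 1/2)/Γ(k)) · (Γ(N + 1)/Γ(N + 3/2))| ≤ C·ρ^N. In particular, the expected k-th nearest-neighbor distance equals the flat-space closed form up to corrections exponentially small in N. -/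
open MeasureTheory Metric Filter
open scoped ENNReal Topology

open intervalIntegral in
theorem aux_integrals (m : ℕ) : ∀ j : ℕ,
    ∫ s in (0:ℝ)..1, s ^ (2 * j) * (1 - s ^ 2) ^ m =
      (1/2) * Real.Gamma (j + 1/2) * m.factorial / Real.Gamma (j + m + 3/2) := by
  induction m with
  | zero =>
    intro j
    have h : Real.Gamma ((j:ℝ) + 1/2 + 1) = (j + 1/2) * Real.Gamma (j + 1/2) :=
      Real.Gamma_add_one (by positivity)
    have hp : 0 < Real.Gamma ((j:ℝ) + 1/2) := Real.Gamma_pos_of_pos (by positivity)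
    have e : (j:ℝ) + ((0:ℕ):ℝ) + 3/2 = j + 1/2 + 1 := by push_cast; ring
    rw [e, h]
    simp
    field_simp
  | succ m ih =>
    intro j
    have h0 : ∀ s : ℝ, s ^ (2 * j) * (1 - s ^ 2) ^ (m+1) =
        s ^ (2 * j) * (1 - s ^ 2) ^ m - s ^ (2 * (j+1)) * (1 - s ^ 2) ^ m := by
      intro s; ring
    simp_rw [h0]
    rw [intervalIntegral.integral_sub, ih j, ih (j+1)]
    · have h : Real.Gamma ((j:ℝ) + 1/2 + 1) = (j + 1/2) * Real.Gamma (j + 1/2) :=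
        Real.Gamma_add_one (by positivity)
      have h2 : Real.Gamma ((j:ℝ) + m + 3/2 + 1) = (j + m + 3/2) * Real.Gamma (j + m + 3/2) :=
        Real.Gamma_add_one (by positivity)
      have hp2 : 0 < Real.Gamma ((j:ℝ) + m + 3/2) := Real.Gamma_pos_of_pos (by positivity)
      have e1 : ((j+1:ℕ):ℝ) + 1/2 = j + 1/2 + 1 := by push_cast; ring
      have e2 : ((j+1:ℕ):ℝ) + m + 3/2 = j + m + 3/2 + 1 := by push_cast; ring
      have e3 : (j:ℝ) + ((m+1:ℕ):ℝ) + 3/2 = j + m + 3/2 + 1 := by push_cast; ring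
      rw [e1, e2, e3, h, h2, Nat.factorial_succ]
      have : (j:ℝ) + m + 3/2 ≠ 0 := by positivity
      push_cast
      generalize Real.Gamma ((j:ℝ) + m + 3/2) = G at *
      have hG : G ≠ 0 := hp2.ne'
      field_simp
      ring
    · exact Continuous.intervalIntegrable (by fun_prop) _ _
    · exact Continuous.intervalIntegrable (by fun_prop) _ _

theorem aux_gammasum (k : ℕ) :
    ∑ j ∈ Finset.range (k+1), Real.Gamma ((j:ℝ) + 1/2) / j.factorial =
      2 * Real.Gamma ((k+1:ℕ) + 1/2) / k.factorial := by
  induction k with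
  | zero =>
    have h : Real.Gamma ((1/2:ℝ) + 1) = (1/2) * Real.Gamma (1/2) :=
      Real.Gamma_add_one (by positivity)
    have e : (((0+1:ℕ):ℝ) + 1/2) = 1/2 + 1 := by norm_num
    rw [e, h]; simp
  | succ k ih =>
    rw [Finset.sum_range_succ, ih]
    have h : Real.Gamma (((k+1:ℕ):ℝ) + 1/2 + 1) = ((k+1:ℕ) + 1/2) * Real.Gamma ((k+1:ℕ) + 1/2) :=
      Real.Gamma_add_one (by positivity)
    have e : (((k+1+1:ℕ):ℝ) + 1/2) = (k+1:ℕ) + 1/2 + 1 := by push_cast; ring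
    rw [e, h, Nat.factorial_succ]
    generalize Real.Gamma (((k+1:ℕ):ℝ) + 1/2) = G
    have : (k.factorial : ℝ) ≠ 0 := by positivity
    push_cast
    field_simp

/-- binomial lower tail -/
noncomputable def auxQ (N k : ℕ) (p : ℝ) : ℝ :=
  ∑ j ∈ Finset.range k, (N.choose j : ℝ) * p ^ j * (1 - p) ^ (N - j)

theorem auxQ_cont (N k : ℕ) : Continuous (auxQ N k) := by
  unfold auxQ; fun_prop

theorem auxQ_integral (N k : ℕ) (hk : 1 ≤ k) (hkN : k ≤ N) :
    ∫ l in (0:ℝ)..(Real.sqrt Real.pi)⁻¹, auxQ N k (Real.pi * l ^ 2) =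
      (Real.sqrt Real.pi)⁻¹ * (Real.Gamma (k + 1/2) / Real.Gamma k) *
            (Real.Gamma (N + 1) / Real.Gamma (N + 3/2)) := by
  have hpi : 0 < Real.sqrt Real.pi := Real.sqrt_pos.2 Real.pi_pos
  have h1 : ∀ l : ℝ, auxQ N k (Real.pi * l ^ 2) =
      (fun s => auxQ N k (s ^ 2)) (Real.sqrt Real.pi * l) := by
    intro l; simp only [mul_pow, Real.sq_sqrt Real.pi_pos.le]
  simp_rw [h1]
  rw [intervalIntegral.integral_comp_mul_left (fun s => auxQ N k (s ^ 2)) hpi.ne', mul_zero, mul_inv_cancel₀ hpi.ne']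
  have h2 : ∫ s in (0:ℝ)..1, auxQ N k (s ^ 2) =
      ∑ j ∈ Finset.range k, (N.choose j : ℝ) *
        ((1/2) * Real.Gamma (j + 1/2) * (N-j).factorial / Real.Gamma (N + 3/2)) := by
    unfold auxQ
    rw [intervalIntegral.integral_finsetSum]
    · apply Finset.sum_congr rfl
      intro j hj
      have hjN : j ≤ N := by have := Finset.mem_range.1 hj; omega
      have := aux_integrals (N-j) j
      rw [Nat.cast_sub hjN, show (j:ℝ) + (N - j) + 3/2 = N + 3/2 by ring] at this
      rw [← this, ← intervalIntegral.integral_const_mul]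
      congr 1; ext s; rw [pow_mul]; ring
    · intro j _
      exact Continuous.intervalIntegrable (by fun_prop) _ _
  rw [h2, smul_eq_mul, mul_assoc]
  congr 1
  obtain ⟨k, rfl⟩ : ∃ k', k = k' + 1 := ⟨k-1, by omega⟩
  have h3 := aux_gammasum k
  have h4 : Real.Gamma ((k+1:ℕ):ℝ) = k.factorial := by
    push_cast; exact Real.Gamma_nat_eq_factorial k
  rw [h4, Real.Gamma_nat_eq_factorial]
  have h5 : Real.Gamma (((k+1:ℕ):ℝ) + 1/2) / k.factorial =
      (1/2) * ∑ j ∈ Finset.range (k+1), Real.Gamma ((j:ℝ) + 1/2) / j.factorial := by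
    rw [h3]; ring
  rw [h5, Finset.mul_sum, Finset.sum_mul]
  apply Finset.sum_congr rfl
  intro j hj
  have hjN : j ≤ N := by have := Finset.mem_range.1 hj; omega
  have h6 : (N.choose j : ℝ) * j.factorial * (N-j).factorial = N.factorial := by
    exact_mod_cast Nat.choose_mul_factorial_mul_factorial hjN
  rw [← h6]
  have : (j.factorial : ℝ) ≠ 0 := by positivity
  field_simp

theorem auxQ_bound (k : ℕ) (p0 ρ : ℝ) (hp0 : p0 ≤ 1) (hρ : 1 - p0 < ρ) (hp00 : 0 ≤ p0) :
    ∃ C > 0, ∀ N : ℕ, k ≤ N → ∀ p : ℝ, p0 ≤ p → p ≤ 1 → |auxQ N k p| ≤ C * ρ ^ N := by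
  have hρ0 : 0 < ρ := by linarith
  set r := (1 - p0 + ρ) / 2 with hr
  have hr0 : 0 < r := by rw [hr]; linarith
  have hrρ : r < ρ := by rw [hr]; linarith
  have hb : ∀ j : ℕ, ∃ C : ℝ, ∀ N : ℕ, (N:ℝ) ^ j * (r / ρ) ^ N ≤ C := by
    intro j
    have := tendsto_pow_const_mul_const_pow_of_abs_lt_one j (r := r / ρ)
      (by rw [abs_of_pos (by positivity)]; exact (div_lt_one hρ0).2 hrρ)
    obtain ⟨C, hC⟩ := this.bddAbove_range
    exact ⟨C, fun N => hC ⟨N, rfl⟩⟩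
  choose c hc using hb
  have hc0 : ∀ j, 0 ≤ c j := fun j => le_trans (by positivity) (hc j 0)
  refine ⟨∑ j ∈ Finset.range k, c j / r ^ j + 1, ?_, ?_⟩
  · have : 0 ≤ ∑ j ∈ Finset.range k, c j / r ^ j :=
      Finset.sum_nonneg fun j _ => div_nonneg (hc0 j) (by positivity)
    linarith
  intro N hN p hp hp1
  have hpp : 0 ≤ p := hp00.trans hp
  have h1p : 0 ≤ 1 - p := by linarith
  have key : |auxQ N k p| ≤ ∑ j ∈ Finset.range k, c j / r ^ j * ρ ^ N := by
    refine (Finset.abs_sum_le_sum_abs _ _).trans (Finset.sum_le_sum ?_)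
    intro j hj
    have hjN : j ≤ N := by have := Finset.mem_range.1 hj; omega
    rw [abs_of_nonneg (by positivity)]
    have e1 : (N.choose j : ℝ) ≤ (N:ℝ) ^ j := by exact_mod_cast Nat.choose_le_pow N j
    have e2 : p ^ j ≤ 1 := pow_le_one₀ hpp hp1
    have e3 : (1 - p) ^ (N - j) ≤ r ^ (N - j) := pow_le_pow_left₀ h1p (by rw [hr]; linarith) _
    have e4 : r ^ (N - j) = r ^ N / r ^ j := by
      rw [eq_div_iff (by positivity), ← pow_add, Nat.sub_add_cancel hjN]
    have e5 := hc j N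
    rw [div_pow, ← mul_div_assoc, div_le_iff₀ (by positivity)] at e5
    calc (N.choose j : ℝ) * p ^ j * (1 - p) ^ (N - j)
        ≤ (N:ℝ) ^ j * 1 * r ^ (N - j) := by gcongr
      _ = ((N:ℝ) ^ j * r ^ N) / r ^ j := by rw [e4]; ring
      _ ≤ (c j * ρ ^ N) / r ^ j := by gcongr
      _ = _ := by ring
  rw [← Finset.sum_mul] at key
  have : 0 < ρ ^ N := by positivity
  linarith

theorem aux_list (l : ℝ) (L : List ℝ) (hL : L.Pairwise (· ≤ ·)) :
    ∀ i : ℕ, i < L.length → (l < L.getD i 0 ↔ L.countP (fun a => decide (a ≤ l)) ≤ i) := by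
  induction L with
  | nil => intro i hi; simp at hi
  | cons a t ih =>
    rw [List.pairwise_cons] at hL
    intro i hi
    by_cases ha : a ≤ l
    · rw [List.countP_cons_of_pos (by simpa using ha)]
      cases i with
      | zero => simpa using ha
      | succ i =>
        simp only [List.getD_cons_succ]
        rw [ih hL.2 i (by simpa using hi)]
        omega
    · have h0 : (a :: t).countP (fun a => decide (a ≤ l)) = 0 := by
        rw [List.countP_eq_zero]
        intro b hb
        rcases List.mem_cons.1 hb with rfl | hb
        · simpa using ha
        · have := hL.1 b hb
          simp only [decide_eq_true_eq]; linarith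
      rw [h0]
      simp only [zero_le, iff_true]
      rw [List.getD_eq_getElem _ _ hi]
      have hm := List.getElem_mem hi
      rcases List.mem_cons.1 hm with h | h
      · rw [h]; linarith
      · have := hL.1 _ h; linarith

theorem aux_kthVal {N k : ℕ} (hk : 1 ≤ k) (hkN : k ≤ N) (f : Fin N → ℝ) (l : ℝ) :
    l < kthVal k f ↔ (Finset.univ.filter (fun i => f i ≤ l)).card < k := by
  unfold kthVal
  rw [aux_list l _ (Multiset.pairwise_sort _ _) (k-1) (by simp; omega)]
  have : (((Finset.univ : Finset (Fin N)).val.map f).sort (· ≤ ·)).countP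
      (fun a => decide (a ≤ l)) = (Finset.univ.filter (fun i => f i ≤ l)).card := by
    rw [← Multiset.coe_countP, Multiset.sort_eq, Multiset.countP_map]
    rfl
  rw [this]; omega

theorem aux_kthVal_mem {N k : ℕ} (hk : 1 ≤ k) (hkN : k ≤ N) (f : Fin N → ℝ) :
    ∃ i, kthVal k f = f i := by
  unfold kthVal
  have hlen : k - 1 < (((Finset.univ : Finset (Fin N)).val.map f).sort (· ≤ ·)).length := by
    simp; omega
  rw [List.getD_eq_getElem _ _ hlen]
  have hm := List.getElem_mem hlen
  rw [Multiset.mem_sort, Multiset.mem_map] at hm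
  obtain ⟨i, _, hi⟩ := hm
  exact ⟨i, hi.symm⟩

theorem aux_prob {M : Type*} [MeasurableSpace M] (μ : Measure M) [IsProbabilityMeasure μ]
    (B : Set M) [DecidablePred (· ∈ B)] (hB : MeasurableSet B) (N k : ℕ) (hkN : k ≤ N) :
    MeasurableSet {ω : Fin N → M | (Finset.univ.filter (fun i => ω i ∈ B)).card < k} ∧
    (Measure.pi fun _ : Fin N => μ).real
      {ω : Fin N → M | (Finset.univ.filter (fun i => ω i ∈ B)).card < k} =
      auxQ N k (μ.real B) := by
  classical
  set T : Finset (Finset (Fin N)) := Finset.univ.filter (fun S => S.card < k) with hT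
  let E : Finset (Fin N) → Set (Fin N → M) := fun S =>
    Set.pi Set.univ (fun i => if i ∈ S then B else Bᶜ)
  have hE : ∀ S ω, ω ∈ E S ↔ Finset.univ.filter (fun i => ω i ∈ B) = S := by
    intro S ω
    simp only [E, Set.mem_univ_pi, Finset.ext_iff, Finset.mem_filter, Finset.mem_univ, true_and]
    apply forall_congr'
    intro i
    by_cases h : i ∈ S <;> simp [h]
  have hEm : ∀ S, MeasurableSet (E S) := by
    intro S
    apply MeasurableSet.univ_pi
    intro i
    split_ifs
    · exact hB
    · exact hB.compl
  have hU : {ω : Fin N → M | (Finset.univ.filter (fun i => ω i ∈ B)).card < k} =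
      ⋃ S ∈ T, E S := by
    ext ω
    simp [hE, hT]
  rw [hU]
  refine ⟨Finset.measurableSet_biUnion _ fun S _ => hEm S, ?_⟩
  rw [measureReal_biUnion_finset]
  · have hS : ∀ S : Finset (Fin N), (Measure.pi fun _ : Fin N => μ).real (E S) =
        μ.real B ^ S.card * (1 - μ.real B) ^ (N - S.card) := by
      intro S
      simp only [E, measureReal_def, Measure.pi_pi, ENNReal.toReal_prod]
      have : ∀ i, (μ (if i ∈ S then B else Bᶜ)).toReal =
          if i ∈ S then μ.real B else 1 - μ.real B := by
        intro i
        split_ifs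
        · rfl
        · exact probReal_compl_eq_one_sub hB
      simp_rw [this]
      rw [Finset.prod_ite]
      simp [Finset.filter_not, Finset.card_sdiff, measureReal_def]
    simp_rw [hS]
    unfold auxQ
    rw [← Finset.sum_fiberwise_of_maps_to (s := T) (t := Finset.range k) (g := Finset.card)
      (by intro S hS; simpa [hT] using hS)]
    apply Finset.sum_congr rfl
    intro j hj
    have hf : T.filter (fun S => S.card = j) = Finset.powersetCard j Finset.univ := by
      ext S
      have := Finset.mem_range.1 hj
      simp [hT, Finset.mem_powersetCard]
      omega
    rw [hf, Finset.sum_congr rfl (g := fun _ => μ.real B ^ j * (1 - μ.real B) ^ (N - j))]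
    · simp; ring
    · intro S hS
      rw [(Finset.mem_powersetCard.1 hS).2]
  · intro S _ S' _ hne
    apply Set.disjoint_left.2
    intro ω h1 h2
    exact hne (((hE S ω).1 h1).symm.trans ((hE S' ω).1 h2))
  · intro S _; exact hEm S

/-- Let `M` be a separable metric space of finite diameter carrying a Borel
probability measure `μ`, and fix `x ∈ M` and `k ≥ 1`.  Suppose there is `l₀ > 0` with
`π l₀² ≤ 1` such that `A(l) = μ(closedBall x l) = π l²` for all `0 ≤ l ≤ l₀` (the space is
locally flat and two-dimensional around `x` out to radius `l₀`).  Then for every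
`ρ ∈ (1 − π l₀², 1)` there is `C > 0` such that for all `N ≥ k`, the expected `k`-th
nearest-neighbor distance (for `N` i.i.d. sites, product measure on `Fin N → M`) satisfies
`|E[D_k(N)] − (1/√π) (Γ(k+1/2)/Γ(k)) (Γ(N+1)/Γ(N+3/2))| ≤ C ρ^N`. -/
theorem kth_nearest_distance_flat_2d
    {M : Type*} [MetricSpace M] [TopologicalSpace.SeparableSpace M]
    [MeasurableSpace M] [BorelSpace M]
    (μ : Measure M) [IsProbabilityMeasure μ]
    (hdiam : EMetric.diam (Set.univ : Set M) < ⊤)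
    (x : M) (k : ℕ) (hk : 1 ≤ k)
    (l₀ : ℝ) (hl₀ : 0 < l₀) (hl₀1 : Real.pi * l₀ ^ 2 ≤ 1)
    (hA : ∀ l : ℝ, 0 ≤ l → l ≤ l₀ →
      (μ (closedBall x l)).toReal = Real.pi * l ^ 2)
    (ρ : ℝ) (hρ₁ : 1 - Real.pi * l₀ ^ 2 < ρ) (hρ₂ : ρ < 1) :
    ∃ C > 0, ∀ N : ℕ, k ≤ N →
      |(∫ ω : Fin N → M, kthVal k (fun i => dist x (ω i))
            ∂(Measure.pi fun _ : Fin N => μ)) -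
          (Real.sqrt Real.pi)⁻¹ * (Real.Gamma (k + 1/2) / Real.Gamma k) *
            (Real.Gamma (N + 1) / Real.Gamma (N + 3/2))| ≤ C * ρ ^ N := by
  classical
  have hpi : 0 < Real.sqrt Real.pi := Real.sqrt_pos.2 Real.pi_pos
  have hp00 : 0 ≤ Real.pi * l₀ ^ 2 := by positivity
  obtain ⟨c, hc, hcb⟩ := auxQ_bound k (Real.pi * l₀ ^ 2) ρ hl₀1 hρ₁ hp00
  set b := (Real.sqrt Real.pi)⁻¹ with hb
  have hb0 : 0 < b := by positivity
  have hbpi : Real.pi * b ^ 2 = 1 := by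
    rw [hb, inv_pow, Real.sq_sqrt Real.pi_pos.le, mul_inv_cancel₀ Real.pi_pos.ne']
  have hlb : l₀ ≤ b := by
    have : l₀ ^ 2 ≤ b ^ 2 := by
      have := hl₀1.trans hbpi.ge
      exact le_of_mul_le_mul_left this Real.pi_pos
    exact (pow_le_pow_iff_left₀ hl₀.le hb0.le two_ne_zero).1 this
  obtain ⟨R, hRl, hRd⟩ : ∃ R, l₀ ≤ R ∧ ∀ y, dist x y ≤ R := by
    have hbd : Bornology.IsBounded (Set.univ : Set M) :=
      Metric.isBounded_iff_ediam_ne_top.2 hdiam.ne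
    refine ⟨max l₀ (Metric.diam (Set.univ : Set M)), le_max_left _ _, fun y => ?_⟩
    exact (Metric.dist_le_diam_of_mem hbd (Set.mem_univ _) (Set.mem_univ _)).trans
      (le_max_right _ _)
  have hR0 : 0 < R := hl₀.trans_le hRl
  refine ⟨c * (R + b), by positivity, ?_⟩
  intro N hN
  set P := Measure.pi fun _ : Fin N => μ with hP
  set D : (Fin N → M) → ℝ := fun ω => kthVal k (fun i => dist x (ω i)) with hD
  have hset : ∀ t, {ω | t < D ω} =
      {ω : Fin N → M | (Finset.univ.filter (fun i => ω i ∈ closedBall x t)).card < k} := by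
    intro t
    ext ω
    simp only [Set.mem_setOf_eq, hD, aux_kthVal hk hN, mem_closedBall, dist_comm x]
  have hprob := fun t => aux_prob μ (closedBall x t) isClosed_closedBall.measurableSet N k hN
  have hDm : Measurable D := by
    apply measurable_of_Ioi
    intro t
    have : D ⁻¹' Set.Ioi t = {ω | t < D ω} := rfl
    rw [this, hset]
    exact (hprob t).1
  have hD0 : ∀ ω, 0 ≤ D ω := by
    intro ω
    obtain ⟨i, hi⟩ := aux_kthVal_mem hk hN (fun i => dist x (ω i))
    simp only [hD]; rw [hi]; exact dist_nonneg
  have hDR : ∀ ω, D ω ≤ R := by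
    intro ω
    obtain ⟨i, hi⟩ := aux_kthVal_mem hk hN (fun i => dist x (ω i))
    simp only [hD]; rw [hi]; exact hRd _
  have hDi : Integrable D P := by
    refine Integrable.of_bound hDm.aestronglyMeasurable R (ae_of_all _ fun ω => ?_)
    rw [Real.norm_of_nonneg (hD0 ω)]; exact hDR ω
  have hGQ : ∀ t, P.real {ω | t < D ω} = auxQ N k (μ.real (closedBall x t)) := by
    intro t
    rw [hset]; exact (hprob t).2
  set G : ℝ → ℝ := fun t => P.real {ω | t < D ω} with hG
  have hGanti : Antitone G := by
    intro s t hst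
    exact measureReal_mono (fun ω (h : t < D ω) => lt_of_le_of_lt hst h)
  have hE : ∫ ω, D ω ∂P = ∫ t in (0:ℝ)..R, G t := by
    rw [hDi.integral_eq_integral_meas_lt (ae_of_all _ hD0),
      intervalIntegral.integral_of_le hR0.le]
    apply setIntegral_eq_of_subset_of_forall_sdiff_eq_zero measurableSet_Ioi
    · exact fun t ht => ht.1
    · intro t ht
      have htR : R < t := by
        by_contra h
        exact ht.2 ⟨ht.1, not_lt.1 h⟩
      have : {ω | t < D ω} = ∅ := by
        ext ω
        simp only [Set.mem_setOf_eq, Set.mem_empty_iff_false, iff_false, not_lt]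
        exact (hDR ω).trans htR.le
      change P.real {ω | t < D ω} = 0
      rw [this]; simp
  have hGi : ∀ u v, IntervalIntegrable G volume u v := fun u v =>
    (hGanti.antitoneOn _).intervalIntegrable
  set H : ℝ → ℝ := fun l => auxQ N k (Real.pi * l ^ 2) with hH
  have hHi : ∀ u v, IntervalIntegrable H volume u v := fun u v =>
    Continuous.intervalIntegrable ((auxQ_cont N k).comp (by fun_prop)) _ _
  have hT := auxQ_integral N k hk hN
  rw [← hb] at hT
  rw [← hT, hE]
  rw [← intervalIntegral.integral_add_adjacent_intervals (hGi 0 l₀) (hGi l₀ R),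
    ← intervalIntegral.integral_add_adjacent_intervals (hHi 0 l₀) (hHi l₀ b)]
  have hGH : ∫ t in (0:ℝ)..l₀, G t = ∫ t in (0:ℝ)..l₀, H t := by
    apply intervalIntegral.integral_congr
    intro t ht
    rw [Set.uIcc_of_le hl₀.le] at ht
    change G t = H t
    rw [hH]
    simp only
    rw [hG]
    simp only
    rw [hGQ, measureReal_def, hA t ht.1 ht.2]
  have b1 : |∫ t in l₀..R, G t| ≤ c * ρ ^ N * |R - l₀| := by
    rw [← Real.norm_eq_abs]
    apply intervalIntegral.norm_integral_le_of_norm_le_const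
    intro t ht
    rw [Set.uIoc_of_le hRl] at ht
    change |P.real {ω | t < D ω}| ≤ _
    rw [hGQ]
    apply hcb N hN
    · rw [← hA l₀ hl₀.le le_rfl]
      exact measureReal_mono (closedBall_subset_closedBall ht.1.le)
    · exact measureReal_le_one
  have b2 : |∫ t in l₀..b, H t| ≤ c * ρ ^ N * |b - l₀| := by
    rw [← Real.norm_eq_abs]
    apply intervalIntegral.norm_integral_le_of_norm_le_const
    intro t ht
    rw [Set.uIoc_of_le hlb] at ht
    have ht0 : 0 ≤ t := hl₀.le.trans ht.1.le
    apply hcb N hN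
    · have := ht.1.le
      gcongr
    · rw [← hbpi]
      have := ht.2
      gcongr
  rw [abs_of_nonneg (sub_nonneg.2 hRl)] at b1
  rw [abs_of_nonneg (sub_nonneg.2 hlb)] at b2
  have hρ0 : 0 < ρ := by linarith
  have hcρ : 0 < c * ρ ^ N := by positivity
  rw [hGH, add_sub_add_left_eq_sub]
  calc _ ≤ |∫ t in l₀..R, G t| + |∫ t in l₀..b, H t| := abs_sub _ _
    _ ≤ c * ρ ^ N * (R - l₀) + c * ρ ^ N * (b - l₀) := add_le_add b1 b2
    _ ≤ c * (R + b) * ρ ^ N := by nlinarith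
end

section
/- There exists a constant C > 0 such that for every integer N ≥ 1: |√N · Γ(N + 1)/Γ(N + 3/2) − 1 + 3/(8N)| ≤ C/N². In other words, √N · Γ(N + 1)/Γ(N + 3/2) = 1 − 3/(8N) + O(1/N²) as N → ∞. -/
open Filter Topology in
/-- The square of the inverse ratio at `x`. -/
noncomputable def gq (x : ℝ) : ℝ := (Real.Gamma (x + 3/2) / Real.Gamma (x + 1)) ^ 2

lemma gq_succ (x : ℝ) (hx : 0 < x) : gq (x + 1) = gq x * ((x + 3/2) / (x + 1)) ^ 2 := by
  have h1 : Real.Gamma (x + 1 + 3/2) = (x + 3/2) * Real.Gamma (x + 3/2) := by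
    rw [← Real.Gamma_add_one (by positivity)]; congr 1; ring
  have h2 : Real.Gamma (x + 1 + 1) = (x + 1) * Real.Gamma (x + 1) :=
    Real.Gamma_add_one (by positivity)
  unfold gq
  rw [h1, h2, ← mul_pow, mul_div_mul_comm, mul_comm]

lemma gamma_mid (x : ℝ) (hx : 0 < x) :
    Real.Gamma (x + 1/2) ^ 2 ≤ Real.Gamma x * Real.Gamma (x + 1) := by
  have h := Real.Gamma_mul_add_mul_le_rpow_Gamma_mul_rpow_Gamma hx
    (show (0:ℝ) < x + 1 by positivity) (show (0:ℝ) < 1/2 by norm_num)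
    (show (0:ℝ) < 1/2 by norm_num) (by norm_num)
  have g1 := Real.Gamma_pos_of_pos hx
  have g2 := Real.Gamma_pos_of_pos (show (0:ℝ) < x + 1 by positivity)
  have g3 := Real.Gamma_pos_of_pos (show (0:ℝ) < x + 1/2 by positivity)
  rw [show 1/2 * x + 1/2 * (x+1) = x + 1/2 by ring, ← Real.sqrt_eq_rpow, ← Real.sqrt_eq_rpow] at h
  calc _ ≤ (√(Real.Gamma x) * √(Real.Gamma (x+1))) ^ 2 := by gcongr
    _ = _ := by rw [mul_pow, Real.sq_sqrt g1.le, Real.sq_sqrt g2.le]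

lemma gq_le (x : ℝ) (hx : 0 < x) : gq x ≤ x + 1 := by
  have h := gamma_mid (x + 1) (by positivity)
  have g2 := Real.Gamma_pos_of_pos (show (0:ℝ) < x + 1 by positivity)
  rw [Real.Gamma_add_one (s := x + 1) (by positivity),
    show x + 1 + 1/2 = x + 3/2 by ring] at h
  unfold gq
  rw [div_pow, div_le_iff₀ (by positivity)]
  linarith

lemma le_gq (x : ℝ) (hx : 0 < x) : x + 1/2 ≤ gq x := by
  have h := gamma_mid (x + 1/2) (by positivity)
  have g2 := Real.Gamma_pos_of_pos (show (0:ℝ) < x + 1 by positivity)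
  have e := Real.Gamma_add_one (s := x + 1/2) (by positivity)
  rw [show x + 1/2 + 1 = x + 3/2 by ring] at e h
  rw [show x + 1/2 + 1/2 = x + 1 by ring] at h
  unfold gq
  rw [div_pow, le_div_iff₀ (by positivity)]
  calc _ ≤ (x + 1/2) * (Real.Gamma (x + 1/2) * Real.Gamma (x + 3/2)) := by gcongr
    _ = _ := by rw [e]; ring

open Filter Topology in
lemma lim_aux (f : ℝ → ℝ) (hf : ∀ x, 1 ≤ x → x ≤ f x ∧ f x ≤ x + 1) :
    Tendsto (fun n : ℕ => gq ((n:ℝ) + 1) / f ((n:ℝ) + 1)) atTop (𝓝 1) := by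
  have h0 : Tendsto (fun n : ℕ => 1 / ((n:ℝ) + 1)) atTop (𝓝 0) :=
    tendsto_one_div_add_atTop_nhds_zero_nat
  refine tendsto_of_tendsto_of_tendsto_of_le_of_le
    (g := fun n : ℕ => 1 - 1 / ((n:ℝ) + 1)) (h := fun n : ℕ => 1 + 1 / ((n:ℝ) + 1))
    (by simpa using h0.const_sub 1) (by simpa using h0.const_add 1) ?_ ?_
  · intro n
    have hx : (1:ℝ) ≤ (n:ℝ) + 1 := by simp
    dsimp only
    generalize (n:ℝ) + 1 = x at hx
    obtain ⟨h1, h2⟩ := hf x hx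
    have := le_gq x (by linarith)
    have hx0 : 0 < x := by linarith
    rw [le_div_iff₀ (by linarith)]
    have h3 : 0 ≤ 1 - 1 / x := by rw [sub_nonneg, div_le_one hx0]; exact hx
    calc _ ≤ (1 - 1/x) * (x + 1) := by gcongr
      _ = x - 1 / x := by field_simp; ring
      _ ≤ x := by linarith [show 0 < 1/x by positivity]
      _ ≤ _ := by linarith
  · intro n
    have hx : (1:ℝ) ≤ (n:ℝ) + 1 := by simp
    dsimp only
    generalize (n:ℝ) + 1 = x at hx
    obtain ⟨h1, h2⟩ := hf x hx
    have := gq_le x (by linarith)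
    have hx0 : 0 < x := by linarith
    rw [div_le_iff₀ (by linarith)]
    calc _ ≤ x + 1 := this
      _ = (1 + 1/x) * x := by field_simp
      _ ≤ _ := by gcongr

lemma gq_lower (n : ℕ) : (n:ℝ) + 1 + 3/4 ≤ gq ((n:ℝ) + 1) := by
  have ha : Antitone (fun n : ℕ => gq ((n:ℝ) + 1) / ((fun x : ℝ => x + 3/4) ((n:ℝ) + 1))) := by
    refine antitone_nat_of_succ_le fun n => ?_
    have hx : (1:ℝ) ≤ (n:ℝ) + 1 := by simp
    push_cast
    generalize (n:ℝ) + 1 = x at hx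
    have hx0 : 0 < x := by linarith
    have := le_gq x hx0
    rw [gq_succ x hx0, div_le_div_iff₀ (by positivity) (by positivity), mul_assoc]
    refine mul_le_mul_of_nonneg_left ?_ (by linarith)
    rw [div_pow, div_mul_eq_mul_div, div_le_iff₀ (by positivity)]
    nlinarith
  have := ha.le_of_tendsto (lim_aux (fun x : ℝ => x + 3/4)
    (fun x hx => ⟨by linarith, by linarith⟩)) n
  rw [le_div_iff₀ (by positivity)] at this
  linarith

lemma gq_upper (n : ℕ) : gq ((n:ℝ) + 1) ≤ (n:ℝ) + 1 + 3/4 + 1 / (32 * ((n:ℝ) + 1)) := by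
  have ha : Monotone (fun n : ℕ =>
      gq ((n:ℝ) + 1) / ((fun x : ℝ => x + 3/4 + 1 / (32 * x)) ((n:ℝ) + 1))) := by
    refine monotone_nat_of_le_succ fun n => ?_
    have hx : (1:ℝ) ≤ (n:ℝ) + 1 := by simp
    push_cast
    generalize (n:ℝ) + 1 = x at hx
    have hx0 : 0 < x := by linarith
    have := le_gq x hx0
    rw [gq_succ x hx0, div_le_div_iff₀ (by positivity) (by positivity), mul_assoc]
    refine mul_le_mul_of_nonneg_left ?_ (by linarith)
    rw [div_pow, div_mul_eq_mul_div, le_div_iff₀ (by positivity)]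
    have e : (x + 3/2)^2 * (x + 3/4 + 1 / (32 * x))
      - (x + 1 + 3/4 + 1 / (32 * (x+1))) * (x+1)^2 = 9 / (128 * x) := by
      field_simp; ring
    have : 0 < 9 / (128 * x) := by positivity
    linarith
  have := ha.ge_of_tendsto (lim_aux (fun x : ℝ => x + 3/4 + 1 / (32 * x))
    (fun x hx => by
      have h1 : 0 < 1 / (32 * x) := by positivity
      have h2 : 1 / (32 * x) ≤ 1 / 32 := by
        apply one_div_le_one_div_of_le <;> linarith
      exact ⟨by linarith, by linarith⟩)) n
  rw [div_le_iff₀ (by positivity)] at this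
  linarith

/-- There is a constant `C > 0` such that for every integer `N ≥ 1`,
`|√N · Γ(N+1)/Γ(N+3/2) − 1 + 3/(8N)| ≤ C/N²`; in other words,
`√N · Γ(N+1)/Γ(N+3/2) = 1 − 3/(8N) + O(1/N²)` as `N → ∞`. -/
theorem gamma_ratio_asymptotics :
    ∃ C > 0, ∀ N : ℕ, 1 ≤ N →
      |Real.sqrt N * Real.Gamma (N + 1) / Real.Gamma (N + 3/2) - 1 + 3 / (8 * N)| ≤
        C / N ^ 2 := by
  refine ⟨2, by norm_num, fun N hN => ?_⟩
  obtain ⟨n, rfl⟩ : ∃ n, N = n + 1 := ⟨N - 1, by omega⟩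
  have hl := gq_lower n
  have hu := gq_upper n
  have hx : (1:ℝ) ≤ (n:ℝ) + 1 := by simp
  push_cast
  generalize (n:ℝ) + 1 = x at hx hl hu
  have hx0 : 0 < x := by linarith
  have g1 := Real.Gamma_pos_of_pos (show (0:ℝ) < x + 1 by positivity)
  have g2 := Real.Gamma_pos_of_pos (show (0:ℝ) < x + 3/2 by positivity)
  have hy2 : (√x * Real.Gamma (x + 1) / Real.Gamma (x + 3/2)) ^ 2 = x / gq x := by
    unfold gq
    rw [div_pow, mul_pow, Real.sq_sqrt hx0.le]
    field_simp
  have hy0 : 0 ≤ √x * Real.Gamma (x + 1) / Real.Gamma (x + 3/2) := by positivity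
  generalize √x * Real.Gamma (x + 1) / Real.Gamma (x + 3/2) = y at hy2 hy0
  have hq : 0 < gq x := by linarith
  generalize gq x = q at *
  have b1 : y ^ 2 ≤ 1 - 3/(4*x) + 9/(16*x^2) := by
    rw [hy2, div_le_iff₀ hq]
    have : 0 ≤ 1 - 3/(4*x) + 9/(16*x^2) := by
      have : 3/(4*x) ≤ 1 := by rw [div_le_one (by positivity)]; linarith
      have : 0 < 9/(16*x^2) := by positivity
      linarith
    calc x ≤ x + 27/(64*x^2) := by linarith [show 0 < 27/(64*x^2) by positivity]
      _ = (1 - 3/(4*x) + 9/(16*x^2)) * (x + 3/4) := by field_simp; ring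
      _ ≤ _ := by gcongr
  have b2 : 1 - 3/(4*x) - 1/(32*x^2) ≤ y ^ 2 := by
    have h1 : x / (x + 3/4 + 1/(32*x)) ≤ y ^ 2 := by rw [hy2]; gcongr
    refine le_trans ?_ h1
    rw [le_div_iff₀ (by positivity)]
    have e : (1 - 3/(4*x) - 1/(32*x^2)) * (x + 3/4 + 1/(32*x)) =
      x - x * (3/(4*x) + 1/(32*x^2))^2 := by field_simp; ring
    rw [e]
    have : 0 ≤ x * (3/(4*x) + 1/(32*x^2))^2 := by positivity
    linarith
  have e1 : 3/(4*x) = 3/4 * (1/x) := by field_simp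
  have e2 : 9/(16*x^2) = 9/16 * (1/x)^2 := by field_simp
  have e3 : 1/(32*x^2) = 1/32 * (1/x)^2 := by field_simp
  have e4 : 3/(8*x) = 3/8 * (1/x) := by field_simp
  have e5 : 2/x^2 = 2 * (1/x)^2 := by field_simp
  rw [e1, e2] at b1
  rw [e1, e3] at b2
  rw [e4, e5]
  have hu0 : 0 < 1/x := by positivity
  have hu1 : 1/x ≤ 1 := by rw [div_le_one hx0]; exact hx
  generalize 1/x = u at *
  have hs : 5/8 ≤ y + (1 - 3/8*u) := by linarith
  have hd : (y - 1 + 3/8*u) * (y + (1 - 3/8*u)) = y^2 - (1 - 3/8*u)^2 := by ring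
  have hp : 0 < u^2 := by positivity
  rw [abs_le]
  constructor
  · by_contra! h
    nlinarith
  · by_contra! h
    nlinarith
end
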